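/- For every permutation w of {1,…,n} and every generic pipe dream δ ∈ GPDs(w), the degree in the variable B of the weight wt(δ) equals n² minus the number of cross, horizontal and vertical tiles of δ, and this degree is at most n² − ℓ(w), where ℓ(w) is the number of inversions of w. Equality holds if and only if δ is a classic pipe dream, i.e., every tile at a position (i,j) with i+j ≤ n is a cross or a bump, every tile at a position with i+j = n+1 is a NW-elbow, every tile at a position with i+j > n+1 is blank, and no two pipes cross each other at more than one tile. -/

import Mathlib

open scoped Classical

namespace GPDpaper

/-- Raw data of a pipe-filling of the `n × n` grid: `d.1 i j` is the (optional) pipe label on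
the vertical edge at row `i`, West of column `j` (so `d.1 i 0` is on the West boundary and
`d.1 i (Fin.last n)` on the East boundary); `d.2 i j` is the label on the horizontal edge
North of row `i` in column `j` (so `d.2 0 j` is on the North boundary and
`d.2 (Fin.last n) j` on the South boundary).  Rows are numbered from the top. -/
abbrev Pipes (n : ℕ) :=
  (Fin n → Fin (n+1) → Option (Fin n)) × (Fin (n+1) → Fin n → Option (Fin n))

variable {n : ℕ}

/-- Label on the West edge of square `(i,j)`. -/
def We (d : Pipes n) (i j : Fin n) : Option (Fin n) := d.1 i j.castSucc
/-- Label on the East edge of square `(i,j)`. -/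
def Ea (d : Pipes n) (i j : Fin n) : Option (Fin n) := d.1 i j.succ
/-- Label on the North edge of square `(i,j)`. -/
def No (d : Pipes n) (i j : Fin n) : Option (Fin n) := d.2 i.castSucc j
/-- Label on the South edge of square `(i,j)`. -/
def So (d : Pipes n) (i j : Fin n) : Option (Fin n) := d.2 i.succ j

/-- The local condition making `d` a generic pipe dream: at each square, the pair of labels
leaving through the East and North edges is either `(W,S)` (cross/horizontal/vertical/blank
tile) or `(S,W)` (bump/elbow/blank tile); moreover two edges of the same square never carry
the same pipe label. -/
def IsValid (d : Pipes n) : Prop :=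
  ∀ i j : Fin n,
    ((Ea d i j, No d i j) = (We d i j, So d i j) ∨
     (Ea d i j, No d i j) = (So d i j, We d i j)) ∧
    (We d i j = So d i j → We d i j = none)

/-- The seven generic pipe dream tiles. -/
inductive Tile where
  | cross | bump | nw | se | horiz | vert | blank
deriving DecidableEq

/-- The tile of a pipe-filling at square `(i,j)`. -/
def tile (d : Pipes n) (i j : Fin n) : Tile :=
  match We d i j, So d i j with
  | some a, some _ => if Ea d i j = some a then .cross else .bump
  | some _, none => if No d i j = none then .horiz else .nw
  | none, some _ => if No d i j = none then .se else .vert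
  | none, none => .blank

/-- `d` is a generic pipe dream for the permutation `w`: it is locally valid, the pipe
entering the West boundary in row `i` is labelled `i`, no pipes meet the East and South
boundaries, and the pipe exiting the North boundary in column `j` is labelled `w⁻¹(j)`. -/
def IsGPDof (w : Equiv.Perm (Fin n)) (d : Pipes n) : Prop :=
  IsValid d ∧
  (∀ i : Fin n, d.1 i 0 = some i) ∧
  (∀ i : Fin n, d.1 i (Fin.last n) = none) ∧
  (∀ j : Fin n, d.2 (Fin.last n) j = none) ∧
  (∀ j : Fin n, d.2 0 j = some (w.symm j))

/-- Number of tiles of `d` of a given type. -/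
noncomputable def tileCount (d : Pipes n) (t : Tile) : ℕ :=
  (Finset.univ.filter (fun p : Fin n × Fin n => tile d p.1 p.2 = t)).card

/-- The pipes labelled `p` and `q` cross at the tile `(i,j)`. -/
def CrossesAt (d : Pipes n) (p q : Fin n) (i j : Fin n) : Prop :=
  tile d i j = .cross ∧
  ((We d i j = some p ∧ So d i j = some q) ∨ (We d i j = some q ∧ So d i j = some p))

/-- The number of tiles at which the pipes labelled `p` and `q` cross. -/
noncomputable def crossCount (d : Pipes n) (p q : Fin n) : ℕ :=
  (Finset.univ.filter (fun ij : Fin n × Fin n => CrossesAt d p q ij.1 ij.2)).card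

/-- No two pipes of `d` cross each other at more than one tile. -/
def NoDoubleCross (d : Pipes n) : Prop := ∀ p q : Fin n, crossCount d p q ≤ 1

/-- Number of inversions (Coxeter length) of a permutation. -/
def invCount (w : Equiv.Perm (Fin n)) : ℕ :=
  (Finset.univ.filter (fun p : Fin n × Fin n => p.1 < p.2 ∧ w p.2 < w p.1)).card

/-- Classic pipe dream (in 1-indexed terms: crosses and bumps for `i+j ≤ n`, NW-elbows on the
antidiagonal `i+j = n+1`, blanks below, and no two pipes crossing twice). -/
def IsClassic (d : Pipes n) : Prop :=
  (∀ i j : Fin n, (i : ℕ) + (j : ℕ) + 2 ≤ n → tile d i j = .cross ∨ tile d i j = .bump) ∧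
  (∀ i j : Fin n, (i : ℕ) + (j : ℕ) + 2 = n + 1 → tile d i j = .nw) ∧
  (∀ i j : Fin n, (i : ℕ) + (j : ℕ) + 2 > n + 1 → tile d i j = .blank) ∧
  NoDoubleCross d

/-- Bumpless-reduced: no bump tiles and no two pipes crossing twice. -/
def IsBumplessReduced (d : Pipes n) : Prop :=
  (∀ i j : Fin n, tile d i j ≠ .bump) ∧ NoDoubleCross d

end GPDpaper

namespace GPDpaper

/-- Variables `x₁,…,xₙ, y₁,…,yₙ, A, B`. -/
inductive Var (n : ℕ) where
  | x (i : Fin n) | y (j : Fin n) | A | B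

variable {n : ℕ}

/-- The weight of a generic pipe dream, in `ℤ[x₁,…,xₙ,y₁,…,yₙ,A,B]`. -/
noncomputable def wt (d : Pipes n) : MvPolynomial (Var n) ℤ :=
  ∏ i : Fin n, ∏ j : Fin n,
    match tile d i j with
    | .cross | .horiz | .vert =>
        MvPolynomial.X Var.A + MvPolynomial.X (Var.x i) - MvPolynomial.X (Var.y j)
    | .blank =>
        MvPolynomial.X Var.B - MvPolynomial.X (Var.x i) + MvPolynomial.X (Var.y j)
    | _ => MvPolynomial.X Var.A + MvPolynomial.X Var.B

/-- The generic pipe dream polynomial `G_w`. -/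
noncomputable def G (w : Equiv.Perm (Fin n)) : MvPolynomial (Var n) ℤ :=
  ∑ d ∈ Finset.univ.filter (fun d : Pipes n => IsGPDof w d), wt d

/-! ### The frontier sweep -/

theorem tile_cross_iff (d : Pipes n) (i j : Fin n) :
    tile d i j = .cross ↔ ∃ a b, We d i j = some a ∧ So d i j = some b ∧ Ea d i j = some a := by
  unfold tile
  rcases h1 : We d i j with _ | a <;> rcases h2 : So d i j with _ | b <;> simp <;> split_ifs <;> simp_all

def VV (d : Pipes n) (i j : ℕ) : Option (Fin n) :=
  if h : i < n ∧ j < n + 1 then d.1 ⟨i, h.1⟩ ⟨j, h.2⟩ else none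

def HH (d : Pipes n) (i j : ℕ) : Option (Fin n) :=
  if h : i < n + 1 ∧ j < n then d.2 ⟨i, h.1⟩ ⟨j, h.2⟩ else none

def FF (d : Pipes n) (i j k : ℕ) : Option (Fin n) :=
  if k < i then VV d k 0
  else if k < i + j then HH d i (k - i)
  else if k = i + j then VV d i j
  else if k ≤ i + n then HH d (i + 1) (k - i - 1)
  else VV d (k - n) n

noncomputable def cnt (d : Pipes n) (i j : ℕ) (p q : Fin n) : ℕ :=
  (Finset.univ.filter (fun ab : Fin n × Fin n =>
    CrossesAt d p q ab.1 ab.2 ∧ (i < ab.1.val ∨ (ab.1.val = i ∧ ab.2.val < j)))).card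

def Inv (F : ℕ → Option (Fin n)) (c : Fin n → Fin n → ℕ) : Prop :=
  ∃ pos : Fin n → ℕ, (∀ k p, F k = some p ↔ pos p = k) ∧
    ∀ p q, p < q → (pos q < pos p ↔ Odd (c p q))

theorem cnt_step (d : Pipes n) (i j : Fin n) (p q : Fin n) :
    cnt d i (j + 1) p q = cnt d i j p q + if CrossesAt d p q i j then 1 else 0 := by
  unfold cnt
  split_ifs with h
  · rw [← Finset.card_insert_of_notMem (a := (i, j))]
    · congr 1
      ext ⟨a, b⟩
      simp only [Finset.mem_filter, Finset.mem_univ, true_and, Finset.mem_insert, Prod.mk.injEq,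
        Fin.ext_iff]
      constructor
      · rintro ⟨h1, h2⟩
        by_cases hb : a.val = i.val ∧ b.val = j.val
        · exact Or.inl hb
        · exact Or.inr ⟨h1, by omega⟩
      · rintro (⟨h1, h2⟩ | ⟨h1, h2⟩)
        · have h1 := Fin.ext h1
          have h2 := Fin.ext h2
          subst h1 h2
          exact ⟨h, by omega⟩
        · exact ⟨h1, by omega⟩
    · simp
  · rw [add_zero]
    congr 1
    ext ⟨a, b⟩
    simp only [Finset.mem_filter, Finset.mem_univ, true_and]
    refine and_congr_right fun h1 => ?_
    by_cases hb : a.val = i.val ∧ b.val = j.val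
    · have h2 := Fin.ext hb.1
      have h3 := Fin.ext hb.2
      subst h2 h3
      exact absurd h1 h
    · omega

theorem VV_We (d : Pipes n) (i j : Fin n) : VV d i j = We d i j := by
  have := i.2; have := j.2
  unfold VV We; rw [dif_pos (by omega)]; rfl
theorem VV_Ea (d : Pipes n) (i j : Fin n) : VV d i (j + 1) = Ea d i j := by
  have := i.2; have := j.2
  unfold VV Ea; rw [dif_pos (by omega)]; rfl
theorem HH_No (d : Pipes n) (i j : Fin n) : HH d i j = No d i j := by
  have := i.2; have := j.2
  unfold HH No; rw [dif_pos (by omega)]; rfl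
theorem HH_So (d : Pipes n) (i j : Fin n) : HH d (i + 1) j = So d i j := by
  have := i.2; have := j.2
  unfold HH So; rw [dif_pos (by omega)]; rfl

theorem FF_W (d : Pipes n) (i j : Fin n) : FF d i j (i + j) = We d i j := by
  rw [← VV_We]; unfold FF
  rw [if_neg (by omega), if_neg (by omega), if_pos rfl]
theorem FF_S (d : Pipes n) (i j : Fin n) : FF d i j (i + j + 1) = So d i j := by
  rw [← HH_So]; unfold FF
  rw [if_neg (by omega), if_neg (by omega), if_neg (by omega), if_pos (by omega)]
  congr 1; omega
theorem FF_N (d : Pipes n) (i j : Fin n) : FF d i (j + 1) (i + j) = No d i j := by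
  rw [← HH_No]; unfold FF
  rw [if_neg (by omega), if_pos (by omega)]
  congr 1; omega
theorem FF_E (d : Pipes n) (i j : Fin n) : FF d i (j + 1) (i + j + 1) = Ea d i j := by
  rw [← VV_Ea]; unfold FF
  rw [if_neg (by omega), if_neg (by omega), if_pos (by omega)]
theorem FF_other (d : Pipes n) (i j k : ℕ) (h1 : k ≠ i + j) (h2 : k ≠ i + j + 1) :
    FF d i (j + 1) k = FF d i j k := by
  unfold FF
  split_ifs <;> first | rfl | omega

theorem FF_row (d : Pipes n) (i k : ℕ) : FF d (i + 1) n k = FF d i 0 k := by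
  unfold FF
  by_cases h1 : k < i
  · rw [if_pos (by omega), if_pos h1]
  by_cases h2 : k = i
  · subst h2
    rw [if_pos (by omega), if_neg (by omega), if_neg (by omega), if_pos (by omega)]
  by_cases h3 : k ≤ i + n
  · rw [if_neg (by omega), if_pos (by omega), if_neg (by omega), if_neg (by omega),
      if_neg (by omega), if_pos (by omega)]
    congr 1
  · split_ifs <;> first | omega | (congr 1; done) | (congr 1; omega)

theorem cnt_row (d : Pipes n) (i : ℕ) (p q : Fin n) : cnt d (i + 1) n p q = cnt d i 0 p q := by
  unfold cnt
  congr 1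
  ext ⟨a, b⟩
  simp only [Finset.mem_filter, Finset.mem_univ, true_and]
  refine and_congr_right fun h1 => ?_
  omega

theorem Inv_step (d : Pipes n) (hv : IsValid d) (i j : Fin n)
    (h : Inv (FF d i j) (cnt d i j)) : Inv (FF d i (j + 1)) (cnt d i (j + 1)) := by
  obtain ⟨pos, hp, ho⟩ := h
  obtain ⟨hE, hne⟩ := hv i j
  simp only [Prod.mk.injEq] at hE
  have hW := fun p => hp (i + j) p
  have hS := fun p => hp (i + j + 1) p
  rw [FF_W] at hW
  rw [FF_S] at hS
  by_cases hsw : Ea d i j = We d i j ∧ No d i j = So d i j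
  · refine ⟨fun p => Equiv.swap ((i : ℕ) + j) (i + j + 1) (pos p), ?_, ?_⟩
    · intro k p
      rw [Equiv.swap_apply_eq_iff]
      by_cases h1 : k = i + j
      · subst h1
        rw [FF_N, hsw.2, hS, Equiv.swap_apply_left]
      by_cases h2 : k = i + j + 1
      · subst h2
        rw [FF_E, hsw.1, hW, Equiv.swap_apply_right]
      rw [FF_other _ _ _ _ h1 h2, Equiv.swap_apply_of_ne_of_ne h1 h2, hp]
    · intro p q hpq
      have hc : CrossesAt d p q i j ↔ (pos p = i + j ∧ pos q = i + j + 1) ∨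
          (pos q = i + j ∧ pos p = i + j + 1) := by
        unfold CrossesAt
        rw [tile_cross_iff, hW, hS, hW, hS]
        constructor
        · exact fun h => h.2
        · intro h
          refine ⟨?_, h⟩
          rcases h with h | h
          · exact ⟨p, q, (hW p).2 h.1, (hS q).2 h.2, by rw [hsw.1]; exact (hW p).2 h.1⟩
          · exact ⟨q, p, (hW q).2 h.1, (hS p).2 h.2, by rw [hsw.1]; exact (hW q).2 h.1⟩
      have hpne : pos p ≠ pos q := by
        intro e
        have h1 := (hp (pos q) p).2 e
        have h2 := (hp (pos q) q).2 rfl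
        rw [h1] at h2
        exact hpq.ne (Option.some.inj h2)
      have := ho p q hpq
      rw [cnt_step]
      simp only [Equiv.swap_apply_def]
      by_cases hcc : CrossesAt d p q i j
      · rw [if_pos hcc, Nat.odd_add_one, ← this]
        rw [hc] at hcc
        split_ifs <;> omega
      · rw [if_neg hcc, add_zero, ← this]
        rw [hc] at hcc
        split_ifs <;> omega
  · have hns : Ea d i j = So d i j ∧ No d i j = We d i j := by tauto
    refine ⟨pos, ?_, ?_⟩
    · intro k p
      by_cases h1 : k = i + j
      · subst h1
        rw [FF_N, hns.2, hW]
      by_cases h2 : k = i + j + 1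
      · subst h2
        rw [FF_E, hns.1, hS]
      rw [FF_other _ _ _ _ h1 h2, hp]
    · intro p q hpq
      rw [cnt_step, if_neg, add_zero, ho p q hpq]
      rintro ⟨h1, -⟩
      rw [tile_cross_iff] at h1
      obtain ⟨a, b, ha, hb, he⟩ := h1
      have : We d i j = So d i j := by rw [ha, ← he, hns.1]
      rw [hne this] at ha
      cases ha

theorem Inv_rowend (d : Pipes n) (hv : IsValid d) (i : Fin n)
    (h : Inv (FF d i 0) (cnt d i 0)) : ∀ j : ℕ, j ≤ n → Inv (FF d i j) (cnt d i j) := by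
  intro j
  induction j with
  | zero => exact fun _ => h
  | succ j ih =>
    intro hj
    exact Inv_step d hv i ⟨j, hj⟩ (ih (by omega))

theorem Inv_all (w : Equiv.Perm (Fin n)) (d : Pipes n) (hd : IsGPDof w d) :
    ∀ m i : ℕ, i + m + 1 = n → Inv (FF d i 0) (cnt d i 0) := by
  obtain ⟨hv, h1, h2, h3, h4⟩ := hd
  intro m
  induction m with
  | zero =>
    intro i hi
    refine ⟨fun p => p, ?_, ?_⟩
    · intro k p
      have : FF d i 0 k = if h : k < n then some ⟨k, h⟩ else none := by
        have hV : ∀ k (h : k < n), VV d k 0 = some ⟨k, h⟩ := by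
          intro k h
          unfold VV
          rw [dif_pos (by omega)]
          exact h1 ⟨k, h⟩
        unfold FF
        by_cases hk : k < i
        · rw [if_pos hk, hV k (by omega), dif_pos (by omega)]
        rw [if_neg hk, if_neg (by omega)]
        by_cases hk : k = i
        · subst hk
          rw [if_pos (by omega), hV k (by omega), dif_pos (by omega)]
        rw [if_neg (by omega), dif_neg (by omega)]
        split_ifs with h
        · unfold HH
          split_ifs with h'
          · have : (⟨i + 1, h'.1⟩ : Fin (n + 1)) = Fin.last n := by
              ext; simp; omega
            rw [this, h3]
          · rfl
        · unfold VV
          split_ifs with h'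
          · exact h2 _
          · rfl
      rw [this]
      split_ifs with h
      · simp [Fin.ext_iff, eq_comm]
      · simp; omega
    · intro p q hpq
      have : cnt d i 0 p q = 0 := by
        unfold cnt
        rw [Finset.card_eq_zero, Finset.filter_eq_empty_iff]
        rintro ⟨a, b⟩ -
        simp only
        rintro ⟨-, h⟩
        omega
      rw [this]
      simp
      exact hpq.le
  | succ m ih =>
    intro i hi
    have := Inv_rowend d hv ⟨i + 1, by omega⟩ (ih (i + 1) (by omega)) n le_rfl
    have e1 : FF d (i + 1) n = FF d i 0 := funext fun k => FF_row d i k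
    have e2 : cnt d (i + 1) n = cnt d i 0 := funext fun p => funext fun q => cnt_row d i p q
    simp only [e1, e2] at this
    exact this

theorem parity (w : Equiv.Perm (Fin n)) (d : Pipes n) (hd : IsGPDof w d) (p q : Fin n)
    (hpq : p < q) : w q < w p ↔ Odd (crossCount d p q) := by
  have hn : 0 < n := p.pos
  have := Inv_rowend d hd.1 ⟨0, hn⟩ (Inv_all w d hd (n - 1) 0 (by omega)) n le_rfl
  obtain ⟨pos, hp, ho⟩ := this
  have hpos : ∀ p, pos p = w p := by
    intro p
    rw [← hp]
    have h4 := hd.2.2.2.2 (w p)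
    rw [Equiv.symm_apply_apply] at h4
    rw [← h4]
    unfold FF
    rw [if_neg (by simp), if_pos (by simp)]
    unfold HH
    rw [dif_pos (by simp)]
    rfl
  have := ho p q hpq
  rw [hpos, hpos] at this
  rw [Fin.lt_def, this]
  have : cnt d 0 n p q = crossCount d p q := by
    unfold cnt crossCount
    congr 1
    ext ⟨a, b⟩
    simp only [Finset.mem_filter, Finset.mem_univ, true_and, and_iff_left_iff_imp]
    omega
  simp only [this]

theorem cross_labels (d : Pipes n) (hv : IsValid d) (p q i j : Fin n) (h : CrossesAt d p q i j) :
    p ≠ q := by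
  rintro rfl
  obtain ⟨-, h⟩ := h
  have hh : We d i j = some p ∧ So d i j = some p := by tauto
  have := (hv i j).2 (by rw [hh.1, hh.2])
  rw [hh.1] at this
  cases this

theorem cross_sum (d : Pipes n) (hv : IsValid d) :
    tileCount d .cross =
      ∑ pq ∈ Finset.univ.filter (fun p : Fin n × Fin n => p.1 < p.2), crossCount d pq.1 pq.2 := by
  unfold tileCount crossCount
  rw [← Finset.card_biUnion]
  · congr 1
    ext ⟨i, j⟩
    simp only [Finset.mem_filter, Finset.mem_univ, true_and, Finset.mem_biUnion, Prod.exists]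
    constructor
    · intro h
      obtain ⟨a, b, ha, hb, he⟩ := (tile_cross_iff d i j).1 h
      have hc : CrossesAt d a b i j := ⟨h, Or.inl ⟨ha, hb⟩⟩
      rcases lt_or_gt_of_ne (cross_labels d hv _ _ _ _ hc) with hl | hl
      · exact ⟨a, b, hl, hc⟩
      · exact ⟨b, a, hl, ⟨h, Or.inr ⟨ha, hb⟩⟩⟩
    · rintro ⟨a, b, -, h⟩
      exact h.1
  · rintro ⟨p, q⟩ hpq ⟨p', q'⟩ hpq' hne
    rw [Function.onFun, Finset.disjoint_left]
    rintro ⟨i, j⟩ h1 h2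
    simp only [Finset.coe_filter, Finset.mem_filter, Finset.mem_univ, true_and,
      Set.mem_ofPred_eq] at h1 h2 hpq hpq'
    obtain ⟨-, h1⟩ := h1
    obtain ⟨-, h2⟩ := h2
    apply hne
    rcases h1 with ⟨h1, h1'⟩ | ⟨h1, h1'⟩ <;> rcases h2 with ⟨h2, h2'⟩ | ⟨h2, h2'⟩ <;>
      rw [h1] at h2 <;> rw [h1'] at h2' <;> cases h2 <;> cases h2'
    · rfl
    · exact absurd hpq (not_lt_of_gt hpq')
    · exact absurd hpq (not_lt_of_gt hpq')
    · rfl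

theorem inv_sum (w : Equiv.Perm (Fin n)) (d : Pipes n) (hd : IsGPDof w d) :
    invCount w =
      ∑ pq ∈ Finset.univ.filter (fun p : Fin n × Fin n => p.1 < p.2),
        crossCount d pq.1 pq.2 % 2 := by
  unfold invCount
  rw [← Finset.filter_filter, Finset.card_filter]
  refine Finset.sum_congr rfl ?_
  rintro ⟨p, q⟩ h
  simp only [Finset.mem_filter, Finset.mem_univ, true_and] at h
  have := parity w d hd p q h
  rw [Nat.odd_iff] at this
  simp only [this]
  split_ifs <;> omega

theorem nodouble_iff (d : Pipes n) (hv : IsValid d) :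
    NoDoubleCross d ↔ ∀ p q, p < q → crossCount d p q ≤ 1 := by
  refine ⟨fun h p q _ => h p q, fun h p q => ?_⟩
  rcases lt_trichotomy p q with hl | rfl | hl
  · exact h p q hl
  · have : crossCount d p p = 0 := by
      unfold crossCount
      rw [Finset.card_eq_zero, Finset.filter_eq_empty_iff]
      rintro ⟨a, b⟩ - hc
      exact cross_labels d hv _ _ _ _ hc rfl
    omega
  · have : crossCount d p q = crossCount d q p := by
      unfold crossCount CrossesAt
      congr 1
      ext ⟨a, b⟩
      simp only [Finset.mem_filter, Finset.mem_univ, true_and]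
      tauto
    rw [this]
    exact h q p hl

theorem inv_le (w : Equiv.Perm (Fin n)) (d : Pipes n) (hd : IsGPDof w d) :
    invCount w ≤ tileCount d .cross := by
  rw [inv_sum w d hd, cross_sum d hd.1]
  exact Finset.sum_le_sum fun _ _ => Nat.mod_le _ _

theorem inv_eq_iff (w : Equiv.Perm (Fin n)) (d : Pipes n) (hd : IsGPDof w d) :
    invCount w = tileCount d .cross ↔ NoDoubleCross d := by
  rw [inv_sum w d hd, cross_sum d hd.1, nodouble_iff d hd.1,
    Finset.sum_eq_sum_iff_of_le fun _ _ => Nat.mod_le _ _]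
  simp only [Finset.mem_filter, Finset.mem_univ, true_and, Prod.forall]
  refine forall_congr' fun p => forall_congr' fun q => imp_congr_right fun _ => ?_
  omega

theorem shape (w : Equiv.Perm (Fin n)) (d : Pipes n) (hd : IsGPDof w d)
    (hh : ∀ i j, tile d i j ≠ .horiz) (hvv : ∀ i j, tile d i j ≠ .vert) :
    ∀ i j : Fin n, ((We d i j).isSome ↔ i.val + j < n) ∧ ((So d i j).isSome ↔ i.val + j + 1 < n) := by
  obtain ⟨hv, h1, h2, h3, h4⟩ := hd
  have key : ∀ i j : Fin n, (Ea d i j).isSome = (So d i j).isSome ∧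
      (No d i j).isSome = (We d i j).isSome := by
    intro i j
    have a1 := hh i j
    have a2 := hvv i j
    have a3 := (hv i j).1
    unfold tile at a1 a2
    simp only [Prod.mk.injEq] at a3
    rcases e1 : We d i j with _ | a <;> rcases e2 : So d i j with _ | b <;>
      rw [e1, e2] at a1 a2 a3 <;> rcases a3 with ⟨a3, a4⟩ | ⟨a3, a4⟩ <;> simp_all
  have hW : ∀ j i : ℕ, ∀ (hi : i < n) (hj : j < n),
      (We d ⟨i, hi⟩ ⟨j, hj⟩).isSome ↔ i + j < n := by
    intro j
    induction j with
    | zero =>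
      intro i hi hj
      have : We d ⟨i, hi⟩ ⟨0, hj⟩ = some ⟨i, hi⟩ := h1 ⟨i, hi⟩
      rw [this]
      simpa using hi
    | succ j ih =>
      intro i hi hj
      have e : We d ⟨i, hi⟩ ⟨j + 1, hj⟩ = Ea d ⟨i, hi⟩ ⟨j, by omega⟩ := rfl
      rw [e, (key _ _).1]
      by_cases hi' : i + 1 < n
      · have e : So d ⟨i, hi⟩ ⟨j, by omega⟩ = No d ⟨i + 1, hi'⟩ ⟨j, by omega⟩ := rfl
        rw [e, (key _ _).2, ih]
        omega
      · have e : So d ⟨i, hi⟩ ⟨j, by omega⟩ = none := by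
          rw [← h3 ⟨j, by omega⟩]
          refine congrArg (fun r => d.2 r ⟨j, by omega⟩) (Fin.ext ?_)
          simp; omega
        rw [e]
        simp; omega
  intro i j
  refine ⟨hW j i i.2 j.2, ?_⟩
  by_cases hi' : i.val + 1 < n
  · have e : So d i j = No d ⟨i + 1, hi'⟩ j := rfl
    rw [e, (key _ _).2]
    have := hW j (i + 1) hi' j.2
    rw [this]
    omega
  · have e : So d i j = none := by
      rw [← h3 j]
      refine congrArg (fun r => d.2 r j) (Fin.ext ?_)
      have := i.2
      simp; omega
    rw [e]
    simp; omega

theorem classic_iff (w : Equiv.Perm (Fin n)) (d : Pipes n) (hd : IsGPDof w d) :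
    IsClassic d ↔ ((∀ i j, tile d i j ≠ .horiz) ∧ (∀ i j, tile d i j ≠ .vert)) ∧
      NoDoubleCross d := by
  constructor
  · rintro ⟨h1, h2, h3, h4⟩
    refine ⟨?_, h4⟩
    have : ∀ i j, tile d i j ≠ .horiz ∧ tile d i j ≠ .vert := by
      intro i j
      rcases lt_trichotomy (i.val + j + 2) (n + 1) with h | h | h
      · rcases h1 i j (by omega) with h | h <;> simp [h]
      · simp [h2 i j h]
      · simp [h3 i j h]
    exact ⟨fun i j => (this i j).1, fun i j => (this i j).2⟩
  · rintro ⟨⟨hh, hv⟩, h4⟩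
    have hs := shape w d hd hh hv
    refine ⟨?_, ?_, ?_, h4⟩ <;> intro i j hij <;> obtain ⟨s1, s2⟩ := hs i j <;>
      have a1 := hh i j <;> have a2 := hv i j <;> unfold tile at a1 a2 ⊢ <;>
      rcases e1 : We d i j with _ | a <;> rcases e2 : So d i j with _ | b <;>
      rw [e1] at s1 a1 a2 <;> rw [e2] at s2 a1 a2 <;> simp at s1 s2 <;> first | omega | skip
    · simp only
      split_ifs <;> simp
    · simp only at a1 ⊢
      split_ifs at a1 ⊢ <;> simp_all

theorem tileCount_eq_zero (d : Pipes n) (t : Tile) :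
    tileCount d t = 0 ↔ ∀ i j, tile d i j ≠ t := by
  unfold tileCount
  rw [Finset.card_eq_zero, Finset.filter_eq_empty_iff]
  simp

/-! ### The degree -/

open MvPolynomial in
theorem deg_zero (i j : Fin n) :
    degreeOf Var.B (X Var.A + X (Var.x i) - X (Var.y j) : MvPolynomial (Var n) ℤ) = 0 := by
  have h1 := degreeOf_sub_le Var.B (X Var.A + X (Var.x i) : MvPolynomial (Var n) ℤ) (X (Var.y j))
  have h2 := degreeOf_add_le Var.B (X Var.A : MvPolynomial (Var n) ℤ) (X (Var.x i))
  simp [degreeOf_X] at h1 h2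
  simp_all

open MvPolynomial in
theorem deg_one (f : MvPolynomial (Var n) ℤ) (h : degreeOf Var.B f = 0) :
    degreeOf Var.B (X Var.B + f) = 1 := by
  have hB : degreeOf Var.B (X Var.B : MvPolynomial (Var n) ℤ) = 1 := by simp [degreeOf_X]
  apply le_antisymm
  · have := degreeOf_add_le Var.B (X Var.B : MvPolynomial (Var n) ℤ) f
    omega
  · have := degreeOf_sub_le Var.B (X Var.B + f) f
    rw [add_sub_cancel_right] at this
    omega

open MvPolynomial in
theorem degree_eq (d : Pipes n) : degreeOf Var.B (wt d) +
    (tileCount d .cross + tileCount d .horiz + tileCount d .vert) = n ^ 2 := by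
  have hp : ∀ i j : Fin n, degreeOf Var.B (match tile d i j with
    | .cross | .horiz | .vert =>
        (X Var.A + X (Var.x i) - X (Var.y j) : MvPolynomial (Var n) ℤ)
    | .blank => X Var.B - X (Var.x i) + X (Var.y j)
    | _ => X Var.A + X Var.B) + ((if tile d i j = .cross then 1 else 0) +
      (if tile d i j = .horiz then 1 else 0) + (if tile d i j = .vert then 1 else 0)) = 1 := by
    intro i j
    have hx : degreeOf Var.B (X Var.B - X (Var.x i) + X (Var.y j) : MvPolynomial (Var n) ℤ) = 1 := by
      rw [sub_add]
      rw [sub_eq_add_neg]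
      apply deg_one
      rw [degreeOf_neg]
      have := degreeOf_sub_le Var.B (X (Var.x i) : MvPolynomial (Var n) ℤ) (X (Var.y j))
      simp [degreeOf_X] at this
      exact this
    have ha : degreeOf Var.B (X Var.A + X Var.B : MvPolynomial (Var n) ℤ) = 1 := by
      rw [add_comm]
      apply deg_one
      simp [degreeOf_X]
    have h0 := deg_zero i j
    rcases tile d i j <;> simp [hx, ha, h0]
  have hne : ∀ i j : Fin n, (match tile d i j with
    | .cross | .horiz | .vert =>
        (X Var.A + X (Var.x i) - X (Var.y j) : MvPolynomial (Var n) ℤ)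
    | .blank => X Var.B - X (Var.x i) + X (Var.y j)
    | _ => X Var.A + X Var.B) ≠ 0 := by
    intro i j h
    have e := congrArg (eval (fun v : Var n => match v with
      | .x _ => (0 : ℤ) | .y _ => 0 | .A => 1 | .B => 1)) h
    revert e
    rcases tile d i j <;> simp
  have hc : ∀ t, tileCount d t = ∑ i : Fin n, ∑ j : Fin n, if tile d i j = t then 1 else 0 := by
    intro t
    unfold tileCount
    rw [Finset.card_filter, Fintype.sum_prod_type]
  unfold wt
  rw [degreeOf_prod_eq _ _ fun i _ => Finset.prod_ne_zero_iff.2 fun j _ => hne i j]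
  rw [Finset.sum_congr rfl fun i _ => degreeOf_prod_eq _ _ fun j _ => hne i j]
  rw [hc, hc, hc]
  simp only [← Finset.sum_add_distrib]
  rw [Finset.sum_congr rfl fun i _ => Finset.sum_congr rfl fun j _ => hp i j]
  simp [sq]

theorem statement0 {n : ℕ} (hn : 1 ≤ n) (w : Equiv.Perm (Fin n)) (d : Pipes n)
    (hd : IsGPDof w d) :
    MvPolynomial.degreeOf Var.B (wt d) +
        (tileCount d .cross + tileCount d .horiz + tileCount d .vert) = n ^ 2 ∧
    MvPolynomial.degreeOf Var.B (wt d) + invCount w ≤ n ^ 2 ∧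
    (MvPolynomial.degreeOf Var.B (wt d) + invCount w = n ^ 2 ↔ IsClassic d) := by
  have hdeg : MvPolynomial.degreeOf Var.B (wt d) +
        (tileCount d .cross + tileCount d .horiz + tileCount d .vert) = n ^ 2 := degree_eq d
  have hle := inv_le w d hd
  refine ⟨hdeg, by omega, ?_⟩
  rw [classic_iff w d hd, ← tileCount_eq_zero, ← tileCount_eq_zero, ← inv_eq_iff w d hd]
  omega

end GPDpaper
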